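/- Let h = 2^d with d ∈ ℕ and w ≥ 2. There exists a binary-union straight-line program computing the FHT pattern set H_{h,w} with at most w·h·log₂(h) = w·d·2^d steps, in which moreover every union taken is a union of two disjoint sets (so the same program computes all the sums Σ_{p∈T} p, T ∈ H_{h,w}, using at most w·h·log₂(h) binary additions). -/

import Mathlib

/-!
FHT patterns. Pixels are pairs `(i, j) : ℕ × ℕ` (row `i`, column `j`).
-/

/-- Width-cyclic translation `tran_{a,b}`: shift rows up by `a` and columns by `b`
cyclically modulo the image width `w`. -/
def tran (w a b : ℕ) (T : Finset (ℕ × ℕ)) : Finset (ℕ × ℕ) :=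
  T.image fun p => (p.1 + a, (p.2 + b) % w)

/-- The column of the (unique, for FHT patterns) pixel of `T` in row `i`. -/
def colAt (T : Finset (ℕ × ℕ)) (i : ℕ) : ℕ :=
  ((T.filter fun p => p.1 = i).image Prod.snd).sup id

/-- Horizontal span `Δ(T) = (j_top - j_bot) mod w` of a pattern of height `h`. -/
def span (w h : ℕ) (T : Finset (ℕ × ℕ)) : ℕ :=
  (colAt T (h - 1) + w - colAt T 0) % w

/-- The FHT pattern sets `H_k` (mostly vertical, inclined to the right) at image width `w`:
`H_0` consists of the single bottom pixels, and `H_{k}` is obtained by stacking a translated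
copy of each `T ∈ H_{k-1}` on top of itself, with horizontal shift `Δ(T) + s`, `s ∈ {0, 1}`.
`H_{h,w}` for `h = 2 ^ d` is `FHT w d`. -/
def FHT (w : ℕ) : ℕ → Finset (Finset (ℕ × ℕ))
  | 0 => (Finset.range w).image fun j => ({(0, j)} : Finset (ℕ × ℕ))
  | k + 1 =>
      ((FHT w k) ×ˢ ({0, 1} : Finset ℕ)).image
        fun q => q.1 ∪ tran w (2 ^ k) (span w (2 ^ k) q.1 + q.2) q.1

/-- An admissible operand of step `t` of a binary-union straight-line program
`s : Fin g → Finset α`: a singleton pixel or some earlier step. -/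
def IsOperand {α : Type*} {g : ℕ} (s : Fin g → Finset α) (t : Fin g) (A : Finset α) : Prop :=
  (∃ p, A = {p}) ∨ ∃ u, u < t ∧ A = s u

/-- `s` is a binary-union straight-line program: each step is the union of two admissible
operands. -/
def ValidProg {α : Type*} [DecidableEq α] {g : ℕ} (s : Fin g → Finset α) : Prop :=
  ∀ t, ∃ A B, IsOperand s t A ∧ IsOperand s t B ∧ s t = A ∪ B

/-- The program `s` computes the pattern family `𝒯`: every pattern of `𝒯` is a singleton
or appears among the steps of `s`. -/
def Computes {α : Type*} {g : ℕ} (s : Fin g → Finset α) (𝒯 : Finset (Finset α)) : Prop :=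
  ∀ T ∈ 𝒯, (∃ p, T = {p}) ∨ ∃ t, s t = T

/-- `OR2 𝒯` is the minimal number of steps (binary gates) over all binary-union
straight-line programs computing `𝒯`. -/
noncomputable def OR2 {α : Type*} [DecidableEq α] (𝒯 : Finset (Finset α)) : ℕ :=
  sInf {g | ∃ s : Fin g → Finset α, ValidProg s ∧ Computes s 𝒯}

/-!
Cut the `2 ^ d` rows into blocks of height `2 ^ k`, and let level `k` consist of the vertical
translates of the patterns of `H_k` to all of these blocks. A pattern of `H_{k+1}` in the `i`-th
block of height `2 ^ (k + 1)` is the union of a pattern of `H_k` in block `2 * i` and a cyclic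
horizontal translate of it in block `2 * i + 1`. Horizontal translation preserves the span, hence
also `H_k`, so both halves are available at level `k`, and one gate suffices. There are at most
`w * 2 ^ k` patterns in `H_k`, so each of the levels `1, …, d` needs at most `w * 2 ^ d` gates;
level `0` needs none.
-/

section Program

variable {α : Type*} {g n n' : ℕ} {s : Fin g → Finset α} {t : Fin g} {A B U : Finset α}
  {𝒯 𝒯' 𝒰 : Finset (Finset α)}

lemma IsOperand.snoc (hA : IsOperand s t A) :
    IsOperand (Fin.snoc (α := fun _ => Finset α) s U) t.castSucc A := by
  rcases hA with hp | ⟨u, hut, rfl⟩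
  · exact .inl hp
  · exact .inr ⟨u.castSucc, Fin.castSucc_lt_castSucc_iff.2 hut, by simp⟩

lemma Computes.isOperand_last (hs : Computes s 𝒯) (hA : A ∈ 𝒯) :
    IsOperand (Fin.snoc (α := fun _ => Finset α) s U) (Fin.last g) A := by
  rcases hs A hA with hp | ⟨u, rfl⟩
  · exact .inl hp
  · exact .inr ⟨u.castSucc, Fin.castSucc_lt_last u, by simp⟩

lemma Computes.mono (hs : Computes s 𝒯) (h𝒯 : 𝒯' ⊆ 𝒯) : Computes s 𝒯' :=
  fun T hT => hs T (h𝒯 hT)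

variable [DecidableEq α]

lemma Computes.snoc (hs : Computes s 𝒯) :
    Computes (Fin.snoc (α := fun _ => Finset α) s U) (insert U 𝒯) := by
  intro T hT
  rcases Finset.mem_insert.1 hT with rfl | hT
  · exact .inr ⟨Fin.last g, by simp⟩
  · exact (hs T hT).imp_right fun ⟨u, hu⟩ => ⟨u.castSucc, by simpa using hu⟩

/-- A binary-union straight-line program all of whose unions are disjoint. -/
def IsDisjointProg (s : Fin g → Finset α) : Prop :=
  ∀ t, ∃ A B, IsOperand s t A ∧ IsOperand s t B ∧ Disjoint A B ∧ s t = A ∪ B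

lemma IsDisjointProg.snoc (hs : IsDisjointProg s)
    (hA : IsOperand (Fin.snoc (α := fun _ => Finset α) s (A ∪ B)) (Fin.last g) A)
    (hB : IsOperand (Fin.snoc (α := fun _ => Finset α) s (A ∪ B)) (Fin.last g) B)
    (hAB : Disjoint A B) :
    IsDisjointProg (Fin.snoc (α := fun _ => Finset α) s (A ∪ B)) := by
  intro t
  cases t using Fin.lastCases with
  | last => exact ⟨A, B, hA, hB, hAB, by simp⟩
  | cast t =>
    obtain ⟨C, D, hC, hD, hCD, ht⟩ := hs t
    exact ⟨C, D, hC.snoc, hD.snoc, hCD, by simpa using ht⟩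

/-- The family `𝒯` is computed by a straight-line program with at most `n` steps, all of them
disjoint unions. -/
def HasDisjointProg (n : ℕ) (𝒯 : Finset (Finset α)) : Prop :=
  ∃ g ≤ n, ∃ s : Fin g → Finset α, IsDisjointProg s ∧ Computes s 𝒯

namespace HasDisjointProg

lemma of_forall_singleton (h𝒯 : ∀ T ∈ 𝒯, ∃ p, T = {p}) : HasDisjointProg 0 𝒯 :=
  ⟨0, le_rfl, Fin.elim0, fun t => t.elim0, fun T hT => .inl (h𝒯 T hT)⟩

lemma mono (h : HasDisjointProg n 𝒯) (hn : n ≤ n') (h𝒯 : 𝒯' ⊆ 𝒯) : HasDisjointProg n' 𝒯' := by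
  obtain ⟨g, hg, s, hs, hc⟩ := h
  exact ⟨g, hg.trans hn, s, hs, hc.mono h𝒯⟩

lemma insert_union (h : HasDisjointProg n 𝒯) (hA : A ∈ 𝒯) (hB : B ∈ 𝒯) (hAB : Disjoint A B) :
    HasDisjointProg (n + 1) (insert (A ∪ B) 𝒯) := by
  obtain ⟨g, hg, s, hs, hc⟩ := h
  exact ⟨g + 1, Nat.succ_le_succ hg, _,
    hs.snoc (hc.isOperand_last hA) (hc.isOperand_last hB) hAB, hc.snoc⟩

lemma union_of_forall_eq_union (h : HasDisjointProg n 𝒯)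
    (h𝒰 : ∀ U ∈ 𝒰, ∃ A ∈ 𝒯, ∃ B ∈ 𝒯, Disjoint A B ∧ U = A ∪ B) :
    HasDisjointProg (n + 𝒰.card) (𝒰 ∪ 𝒯) := by
  induction 𝒰 using Finset.induction_on with
  | empty => simpa using h
  | insert U 𝒰 hU ih =>
    obtain ⟨A, hA, B, hB, hAB, rfl⟩ := h𝒰 U (Finset.mem_insert_self _ _)
    have h𝒰𝒯 := ih fun V hV => h𝒰 V (Finset.mem_insert_of_mem hV)
    rw [Finset.card_insert_of_notMem hU, Finset.insert_union, ← add_assoc]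
    exact h𝒰𝒯.insert_union (Finset.mem_union_right _ hA) (Finset.mem_union_right _ hB) hAB

end HasDisjointProg

end Program

section Translation

variable {w a a' b b' : ℕ} {S T : Finset (ℕ × ℕ)} {p : ℕ × ℕ}

lemma tran_singleton : tran w a b {p} = {(p.1 + a, (p.2 + b) % w)} :=
  Finset.image_singleton _ _

lemma tran_union : tran w a b (S ∪ T) = tran w a b S ∪ tran w a b T :=
  Finset.image_union _ _

lemma tran_tran : tran w a b (tran w a' b' T) = tran w (a + a') (b + b') T := by
  simp only [tran, Finset.image_image, Function.comp_def, Nat.mod_add_mod, add_assoc,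
    add_comm a, add_comm b]

lemma tran_comm : tran w a b (tran w a' b' T) = tran w a' b' (tran w a b T) := by
  rw [tran_tran, tran_tran, add_comm a, add_comm b]

lemma tran_zero_zero (hT : ∀ p ∈ T, p.2 < w) : tran w 0 0 T = T := by
  refine (Finset.image_congr fun p hp => ?_).trans Finset.image_id
  simp [Nat.mod_eq_of_lt (hT p hp)]

lemma disjoint_tran (hS : ∀ p ∈ S, p.1 + a < a') :
    Disjoint (tran w a b S) (tran w a' b' T) := by
  simp only [tran, Finset.disjoint_left, Finset.mem_image]
  rintro _ ⟨p, hp, rfl⟩ ⟨q, -, hqp⟩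
  have hrow : q.1 + a' = p.1 + a := congrArg Prod.fst hqp
  have := hS p hp
  omega

end Translation

/-- The pattern with bottom row `0` and `n` rows whose pixel in row `i` is in column `f i`. -/
def rowGraph (n : ℕ) (f : ℕ → ℕ) : Finset (ℕ × ℕ) :=
  (Finset.range n).image fun i => (i, f i)

section RowGraph

variable {w m n b c i x y : ℕ} {f f' : ℕ → ℕ} {p : ℕ × ℕ}

lemma mem_rowGraph : p ∈ rowGraph n f ↔ p.1 < n ∧ p.2 = f p.1 := by
  obtain ⟨i, j⟩ := p
  simp [rowGraph, eq_comm]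

lemma colAt_rowGraph (hi : i < n) : colAt (rowGraph n f) i = f i := by
  have hrow : (rowGraph n f).filter (fun p => p.1 = i) = {(i, f i)} := by
    ext ⟨i', j⟩
    simp only [Finset.mem_filter, mem_rowGraph, Finset.mem_singleton, Prod.mk.injEq]
    grind
  simp [colAt, hrow]

lemma tran_zero_rowGraph : tran w 0 b (rowGraph n f) = rowGraph n fun i => (f i + b) % w := by
  simp [tran, rowGraph, Finset.image_image, Function.comp_def]

lemma rowGraph_union_tran :
    rowGraph m f ∪ tran w m c (rowGraph n f') =
      rowGraph (m + n) fun i => if i < m then f i else (f' (i - m) + c) % w := by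
  rw [rowGraph, rowGraph, rowGraph, tran, Finset.range_add_eq_union, Finset.image_union,
    Finset.image_image, Finset.map_eq_image, Finset.image_image]
  congr 1
  · exact Finset.image_congr fun i hi => by simp [Finset.mem_range.1 hi]
  · exact Finset.image_congr fun i _ => by simp [add_comm i m]

lemma cyclic_sub_add_right (hy : y < w) :
    ((x + b) % w + w - (y + b) % w) % w = (x + w - y) % w := by
  have hyb : (y + b) % w ≤ (x + b) % w + w :=
    (Nat.mod_lt _ (Nat.zero_lt_of_lt hy)).le.trans (Nat.le_add_left _ _)
  refine (ZMod.natCast_eq_natCast_iff' _ _ _).1 ?_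
  rw [Nat.cast_sub hyb, Nat.cast_sub (hy.le.trans (Nat.le_add_left _ _))]
  simp

lemma span_rowGraph (hn : 0 < n) :
    span w n (rowGraph n f) = (f (n - 1) + w - f 0) % w := by
  rw [span, colAt_rowGraph (Nat.sub_one_lt_of_lt hn), colAt_rowGraph hn]

lemma span_tran_rowGraph (hn : 0 < n) (hf : f 0 < w) :
    span w n (tran w 0 b (rowGraph n f)) = span w n (rowGraph n f) := by
  rw [tran_zero_rowGraph, span_rowGraph hn, span_rowGraph hn, cyclic_sub_add_right hf]

end RowGraph

section FHT

variable {w k m b : ℕ} {T U : Finset (ℕ × ℕ)} {p : ℕ × ℕ}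

lemma mem_FHT_zero : U ∈ FHT w 0 ↔ ∃ j < w, {(0, j)} = U := by
  simp [FHT]

lemma mem_FHT_succ : U ∈ FHT w (k + 1) ↔ ∃ T ∈ FHT w k, ∃ s ∈ ({0, 1} : Finset ℕ),
    T ∪ tran w (2 ^ k) (span w (2 ^ k) T + s) T = U := by
  simp only [FHT, Finset.mem_image, Finset.mem_product, Prod.exists, and_assoc, exists_and_left]

lemma card_FHT_le (w k : ℕ) : (FHT w k).card ≤ w * 2 ^ k := by
  induction k with
  | zero => exact Finset.card_image_le.trans (by simp)
  | succ k ih =>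
    calc (FHT w (k + 1)).card ≤ (FHT w k ×ˢ ({0, 1} : Finset ℕ)).card := Finset.card_image_le
      _ = (FHT w k).card * 2 := Finset.card_product _ _
      _ ≤ w * 2 ^ k * 2 := Nat.mul_le_mul_right _ ih
      _ = w * 2 ^ (k + 1) := by rw [pow_succ, mul_assoc]

lemma exists_eq_rowGraph_of_mem_FHT (hT : T ∈ FHT w k) :
    ∃ f : ℕ → ℕ, (∀ i, f i < w) ∧ T = rowGraph (2 ^ k) f := by
  induction k generalizing T with
  | zero =>
    obtain ⟨j, hj, rfl⟩ := mem_FHT_zero.1 hT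
    exact ⟨fun _ => j, fun _ => hj, by simp [rowGraph]⟩
  | succ k ih =>
    obtain ⟨S, hS, s, -, rfl⟩ := mem_FHT_succ.1 hT
    obtain ⟨f, hf, hSf⟩ := ih hS
    refine ⟨fun i => if i < 2 ^ k then f i else
      (f (i - 2 ^ k) + (span w (2 ^ k) S + s)) % w, fun i => ?_, ?_⟩
    · dsimp only
      split_ifs
      · exact hf i
      · exact Nat.mod_lt _ (Nat.zero_lt_of_lt (hf 0))
    · generalize span w (2 ^ k) S + s = c
      rw [hSf, rowGraph_union_tran, pow_succ, mul_two]

lemma fst_lt_of_mem_FHT (hT : T ∈ FHT w k) (hp : p ∈ T) : p.1 < 2 ^ k := by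
  obtain ⟨f, -, rfl⟩ := exists_eq_rowGraph_of_mem_FHT hT
  exact (mem_rowGraph.1 hp).1

lemma snd_lt_of_mem_FHT (hT : T ∈ FHT w k) (hp : p ∈ T) : p.2 < w := by
  obtain ⟨f, hf, rfl⟩ := exists_eq_rowGraph_of_mem_FHT hT
  exact (mem_rowGraph.1 hp).2 ▸ hf p.1

lemma span_tran_of_mem_FHT (hT : T ∈ FHT w k) :
    span w (2 ^ k) (tran w 0 b T) = span w (2 ^ k) T := by
  obtain ⟨f, hf, rfl⟩ := exists_eq_rowGraph_of_mem_FHT hT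
  exact span_tran_rowGraph (Nat.two_pow_pos k) (hf 0)

lemma tran_mem_FHT (hT : T ∈ FHT w k) : tran w 0 b T ∈ FHT w k := by
  induction k generalizing T with
  | zero =>
    obtain ⟨j, hj, rfl⟩ := mem_FHT_zero.1 hT
    exact mem_FHT_zero.2 ⟨(j + b) % w, Nat.mod_lt _ (Nat.zero_lt_of_lt hj), by
      simp [tran_singleton]⟩
  | succ k ih =>
    obtain ⟨S, hS, s, hs, rfl⟩ := mem_FHT_succ.1 hT
    refine mem_FHT_succ.2 ⟨tran w 0 b S, ih hS, s, hs, ?_⟩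
    rw [span_tran_of_mem_FHT hS, tran_union, tran_comm]

/-- The vertical translates of the patterns of `H_k` to the blocks `0, …, m - 1`, where block `i`
consists of the rows `2 ^ k * i, …, 2 ^ k * (i + 1) - 1`. -/
def FHTBlocks (w k m : ℕ) : Finset (Finset (ℕ × ℕ)) :=
  (FHT w k ×ˢ Finset.range m).image fun q => tran w (2 ^ k * q.2) 0 q.1

lemma mem_FHTBlocks :
    U ∈ FHTBlocks w k m ↔ ∃ T ∈ FHT w k, ∃ i < m, tran w (2 ^ k * i) 0 T = U := by
  simp only [FHTBlocks, Finset.mem_image, Finset.mem_product, Finset.mem_range, Prod.exists,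
    and_assoc, exists_and_left]

lemma FHT_subset_FHTBlocks (hm : 0 < m) : FHT w k ⊆ FHTBlocks w k m := fun T hT =>
  mem_FHTBlocks.2 ⟨T, hT, 0, hm, tran_zero_zero fun _ hp => snd_lt_of_mem_FHT hT hp⟩

lemma card_FHTBlocks_le (w k m : ℕ) : (FHTBlocks w k m).card ≤ w * 2 ^ k * m :=
  calc (FHTBlocks w k m).card ≤ (FHT w k ×ˢ Finset.range m).card := Finset.card_image_le
    _ = (FHT w k).card * m := by rw [Finset.card_product, Finset.card_range]
    _ ≤ w * 2 ^ k * m := Nat.mul_le_mul_right _ (card_FHT_le w k)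

lemma eq_singleton_of_mem_FHTBlocks_zero (hU : U ∈ FHTBlocks w 0 m) : ∃ p, U = {p} := by
  obtain ⟨T, hT, i, -, rfl⟩ := mem_FHTBlocks.1 hU
  obtain ⟨j, -, rfl⟩ := mem_FHT_zero.1 hT
  exact ⟨_, tran_singleton⟩

lemma eq_union_of_mem_FHTBlocks_succ (hU : U ∈ FHTBlocks w (k + 1) m) :
    ∃ A ∈ FHTBlocks w k (2 * m), ∃ B ∈ FHTBlocks w k (2 * m), Disjoint A B ∧ U = A ∪ B := by
  obtain ⟨V, hV, i, hi, rfl⟩ := mem_FHTBlocks.1 hU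
  obtain ⟨T, hT, s, -, rfl⟩ := mem_FHT_succ.1 hV
  generalize span w (2 ^ k) T + s = c
  refine ⟨tran w (2 ^ k * (2 * i)) 0 T,
    mem_FHTBlocks.2 ⟨T, hT, 2 * i, by omega, rfl⟩,
    tran w (2 ^ k * (2 * i + 1)) 0 (tran w 0 c T),
    mem_FHTBlocks.2 ⟨_, tran_mem_FHT hT, 2 * i + 1, by omega, rfl⟩,
    disjoint_tran fun p hp => ?_, ?_⟩
  · have := fst_lt_of_mem_FHT hT hp
    rw [mul_add_one]
    omega
  · have hlower : 2 ^ (k + 1) * i = 2 ^ k * (2 * i) := by ring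
    have hupper : 2 ^ k * (2 * i) + 2 ^ k = 2 ^ k * (2 * i + 1) + 0 := by ring
    rw [tran_union, tran_tran, tran_tran, hlower, hupper]

theorem hasDisjointProg_FHTBlocks (w k m : ℕ) :
    HasDisjointProg (w * k * 2 ^ k * m) (FHTBlocks w k m) := by
  induction k generalizing m with
  | zero =>
    exact (HasDisjointProg.of_forall_singleton
      fun _ => eq_singleton_of_mem_FHTBlocks_zero).mono (Nat.zero_le _) subset_rfl
  | succ k ih =>
    have hprog := (ih (2 * m)).union_of_forall_eq_union
      fun _ (hU : _ ∈ FHTBlocks w (k + 1) m) => eq_union_of_mem_FHTBlocks_succ hU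
    refine hprog.mono ?_ Finset.subset_union_left
    calc w * k * 2 ^ k * (2 * m) + (FHTBlocks w (k + 1) m).card
        ≤ w * k * 2 ^ k * (2 * m) + w * 2 ^ (k + 1) * m :=
          Nat.add_le_add_left (card_FHTBlocks_le w (k + 1) m) _
      _ = w * (k + 1) * 2 ^ (k + 1) * m := by ring

end FHT

/-- For `h = 2 ^ d` and `w ≥ 2` there is a binary-union straight-line program computing the
FHT pattern set `H_{h,w}` with at most `w · h · log₂ h = w · d · 2 ^ d` steps, in which
moreover every union taken is a union of two disjoint sets (so the same program computes all
the sums `Σ_{p ∈ T} p`, `T ∈ H_{h,w}`, using at most `w · h · log₂ h` binary additions). -/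
theorem fht_algorithm (w d : ℕ) (hw : 2 ≤ w) :
    ∃ g ≤ w * d * 2 ^ d, ∃ s : Fin g → Finset (ℕ × ℕ),
      (∀ t, ∃ A B, IsOperand s t A ∧ IsOperand s t B ∧ Disjoint A B ∧ s t = A ∪ B) ∧
      Computes s (FHT w d) := by
  exact (hasDisjointProg_FHTBlocks w d 1).mono (mul_one _).le (FHT_subset_FHTBlocks one_pos)
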